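/- (Euler characteristic of the link of a face.) Let H be a central essential arrangement in a finite-dimensional real vector space V with n = dim V. Then for every face A of H: Σ_{B} (−1)^{n − dim B} = 1, the sum ranging over the finitely many faces B of H with A ≤ B (including B = A); equivalently, Σ_{B ≥ A} (−1)^{dim B} = (−1)^n. -/

import Mathlib

/-! Basic notions for a (central, essential) arrangement of hyperplanes `H`
in a finite-dimensional real vector space, its faces, flats, the dual
arrangement and its faces, and the big/small dual cones. -/

/-- Two points `x`, `y` lie in the same face of the hyperplane arrangement `H`:
for every hyperplane `W ∈ H` and every linear functional `f` with kernel `W`,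
either `f x · f y > 0` or `f x = f y = 0`. -/
def SameFace {V : Type*} [AddCommGroup V] [Module ℝ V]
    (H : Finset (Submodule ℝ V)) (x y : V) : Prop :=
  ∀ W ∈ H, ∀ f : V →ₗ[ℝ] ℝ, LinearMap.ker f = W →
    (0 < f x * f y ∨ (f x = 0 ∧ f y = 0))

/-- A face of the arrangement `H`: an equivalence class of the relation `SameFace`. -/
def IsFace {V : Type*} [AddCommGroup V] [Module ℝ V]
    (H : Finset (Submodule ℝ V)) (A : Set V) : Prop :=
  ∃ x : V, A = {y | SameFace H x y}

/-- A chamber is an open face. -/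
def IsChamber {V : Type*} [AddCommGroup V] [Module ℝ V] [TopologicalSpace V]
    (H : Finset (Submodule ℝ V)) (A : Set V) : Prop :=
  IsFace H A ∧ IsOpen A

/-- A flat of `H`: an intersection of a subfamily of the hyperplanes
(the empty subfamily gives all of `V`). -/
def IsFlat {V : Type*} [AddCommGroup V] [Module ℝ V]
    (H : Finset (Submodule ℝ V)) (L : Submodule ℝ V) : Prop :=
  ∃ J : Finset (Submodule ℝ V), J ⊆ H ∧ L = J.inf id

/-- Two (continuous) linear functionals `f`, `g` lie in the same face of the dual
arrangement `H∨`: for every 1-dimensional flat `l` of `H` and every `x ∈ l`,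
either `f x · g x > 0` or `f x = g x = 0`. -/
def DualSameFace {V : Type*} [NormedAddCommGroup V] [NormedSpace ℝ V]
    (H : Finset (Submodule ℝ V)) (f g : V →L[ℝ] ℝ) : Prop :=
  ∀ l : Submodule ℝ V, IsFlat H l → Module.finrank ℝ l = 1 →
    ∀ x ∈ l, (0 < f x * g x ∨ (f x = 0 ∧ g x = 0))

/-- A face of the dual arrangement `H∨` in the dual space. -/
def IsDualFace {V : Type*} [NormedAddCommGroup V] [NormedSpace ℝ V]
    (H : Finset (Submodule ℝ V)) (A : Set (V →L[ℝ] ℝ)) : Prop :=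
  ∃ f : V →L[ℝ] ℝ, A = {g | DualSameFace H f g}

/-- A chamber of the dual arrangement: an open dual face. -/
def IsDualChamber {V : Type*} [NormedAddCommGroup V] [NormedSpace ℝ V]
    (H : Finset (Submodule ℝ V)) (A : Set (V →L[ℝ] ℝ)) : Prop :=
  IsDualFace H A ∧ IsOpen A

/-- The big dual cone `U(A∨)` of a dual face `A∨`. -/
def bigCone {V : Type*} [NormedAddCommGroup V] [NormedSpace ℝ V]
    (A : Set (V →L[ℝ] ℝ)) : Set V :=
  {x | ∀ f ∈ A, 0 ≤ f x}

/-- The small dual cone `V(A∨)` of a dual face `A∨`: the intersection of the big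
dual cones of all dual chambers `B∨` with `A∨ ≤ B∨`. -/
def smallCone {V : Type*} [NormedAddCommGroup V] [NormedSpace ℝ V]
    (H : Finset (Submodule ℝ V)) (A : Set (V →L[ℝ] ℝ)) : Set V :=
  ⋂ B ∈ {B : Set (V →L[ℝ] ℝ) | IsDualChamber H B ∧ A ⊆ closure B}, bigCone B

open Classical in
/-- signed cell weight -/
noncomputable def cellWt {V : Type*} [AddCommGroup V] [Module ℝ V] (C : Set V) : ℤ :=
  if C.Nonempty then (-1 : ℤ) ^ (Module.finrank ℝ (Submodule.span ℝ C)) else 0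

/-- relatively open convex set in a subspace -/
structure RelOpen {V : Type*} [AddCommGroup V] [Module ℝ V] (C : Set V)
    (L : Submodule ℝ V) : Prop where
  sub : C ⊆ L
  conv : Convex ℝ C
  op : ∀ x ∈ C, ∀ y ∈ L, ∀ᶠ t : ℝ in nhds 0, x + t • y ∈ C

theorem RelOpen.span {V : Type*} [AddCommGroup V] [Module ℝ V] {C : Set V}
    {L : Submodule ℝ V} (h : RelOpen C L) (hC : C.Nonempty) : Submodule.span ℝ C = L := by
  apply le_antisymm (Submodule.span_le.2 h.sub)
  intro y hy
  obtain ⟨x, hx⟩ := hC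
  have h1 := (h.op x hx y hy).filter_mono (nhdsWithin_le_nhds (s := Set.Ioi 0))
  obtain ⟨t, ht, ht0⟩ := (h1.and self_mem_nhdsWithin).exists
  have ht0 : (0 : ℝ) < t := ht0
  have h2 : t • y ∈ Submodule.span ℝ C := by
    have := Submodule.sub_mem _ (Submodule.subset_span (R := ℝ) ht) (Submodule.subset_span hx)
    simpa using this
  exact (Submodule.smul_mem_iff _ ht0.ne').1 h2

theorem RelOpen.wt {V : Type*} [AddCommGroup V] [Module ℝ V] {C : Set V}
    {L : Submodule ℝ V} (h : RelOpen C L) (hC : C.Nonempty) :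
    cellWt C = (-1) ^ (Module.finrank ℝ L) := by
  rw [cellWt, if_pos hC, h.span hC]

theorem cellWt_empty {V : Type*} [AddCommGroup V] [Module ℝ V] {C : Set V}
    (h : ¬ C.Nonempty) : cellWt C = 0 := by
  rw [cellWt, if_neg h]

theorem line_tendsto {V : Type*} [AddCommGroup V] [Module ℝ V] (f : V →ₗ[ℝ] ℝ) (x y : V) :
    Filter.Tendsto (fun t : ℝ => f (x + t • y)) (nhds 0) (nhds (f x)) := by
  have : Continuous (fun t : ℝ => f x + t * f y) := by fun_prop
  have := this.tendsto 0
  simpa using this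

theorem RelOpen.pos {V : Type*} [AddCommGroup V] [Module ℝ V] {C : Set V}
    {L : Submodule ℝ V} (h : RelOpen C L) (f : V →ₗ[ℝ] ℝ) :
    RelOpen (C ∩ {x | 0 < f x}) L where
  sub := fun x hx => h.sub hx.1
  conv := h.conv.inter (convex_halfSpace_gt f.isLinear 0)
  op := fun x hx y hy => by
    filter_upwards [h.op x hx.1 y hy, (line_tendsto f x y).eventually (lt_mem_nhds hx.2)]
      with t h1 h2 using ⟨h1, h2⟩

theorem RelOpen.zero {V : Type*} [AddCommGroup V] [Module ℝ V] {C : Set V}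
    {L : Submodule ℝ V} (h : RelOpen C L) (f : V →ₗ[ℝ] ℝ) :
    RelOpen (C ∩ {x | f x = 0}) (L ⊓ LinearMap.ker f) where
  sub := fun x hx => ⟨h.sub hx.1, hx.2⟩
  conv := h.conv.inter (convex_hyperplane f.isLinear 0)
  op := fun x hx y hy => by
    filter_upwards [h.op x hx.1 y hy.1] with t h1
    refine ⟨h1, ?_⟩
    have h2 : f x = 0 := hx.2
    have h3 : f y = 0 := hy.2
    simp [h2, h3]

theorem set_sign_neg {V : Type*} [AddCommGroup V] [Module ℝ V] (f : V →ₗ[ℝ] ℝ) :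
    {x | SignType.sign (f x) = -1} = {x | 0 < (-f) x} := by
  ext x; simp [sign_eq_neg_one_iff]

theorem set_sign_pos {V : Type*} [AddCommGroup V] [Module ℝ V] (f : V →ₗ[ℝ] ℝ) :
    {x | SignType.sign (f x) = 1} = {x | 0 < f x} := by
  ext x; simp [sign_eq_one_iff]

theorem set_sign_zero {V : Type*} [AddCommGroup V] [Module ℝ V] (f : V →ₗ[ℝ] ℝ) :
    {x | SignType.sign (f x) = 0} = {x | f x = 0} := by
  ext x; simp [sign_eq_zero_iff]

theorem RelOpen.sign {V : Type*} [AddCommGroup V] [Module ℝ V] {C : Set V}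
    {L : Submodule ℝ V} (h : RelOpen C L) (f : V →ₗ[ℝ] ℝ) (s : SignType) :
    ∃ L', RelOpen (C ∩ {x | SignType.sign (f x) = s}) L' := by
  rcases s.trichotomy with rfl | rfl | rfl
  · rw [set_sign_neg]; exact ⟨_, h.pos _⟩
  · rw [set_sign_zero]; exact ⟨_, h.zero _⟩
  · rw [set_sign_pos]; exact ⟨_, h.pos _⟩

theorem RelOpen.pos_nonempty {V : Type*} [AddCommGroup V] [Module ℝ V] {C : Set V}
    {L : Submodule ℝ V} (h : RelOpen C L) (f : V →ₗ[ℝ] ℝ) {y : V} (hy : y ∈ L) (hfy : f y ≠ 0)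
    (h0 : (C ∩ {x | f x = 0}).Nonempty) : (C ∩ {x | 0 < f x}).Nonempty := by
  obtain ⟨x, hx, hfx⟩ := h0
  have hfx : f x = 0 := hfx
  have h1 := (h.op x hx (f y • y) (L.smul_mem _ hy)).filter_mono
    (nhdsWithin_le_nhds (s := Set.Ioi 0))
  obtain ⟨t, ht, ht0⟩ := (h1.and self_mem_nhdsWithin).exists
  have ht0 : (0 : ℝ) < t := ht0
  refine ⟨_, ht, ?_⟩
  have : 0 < f y * f y := mul_self_pos.2 hfy
  simp only [Set.mem_ofPred_eq, map_add, map_smul, smul_eq_mul, hfx, zero_add]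
  positivity

theorem finrank_inf_ker {V : Type*} [AddCommGroup V] [Module ℝ V] [FiniteDimensional ℝ V]
    (L : Submodule ℝ V) (f : V →ₗ[ℝ] ℝ) {y : V} (hy : y ∈ L) (hfy : f y ≠ 0) :
    Module.finrank ℝ (L ⊓ LinearMap.ker f : Submodule ℝ V) + 1 = Module.finrank ℝ L := by
  have h0 : f.domRestrict L ≠ 0 := fun h => hfy (by
    have := LinearMap.congr_fun h ⟨y, hy⟩
    simpa using this)
  have := Module.Dual.finrank_ker_add_one_of_ne_zero (f := (f.domRestrict L : Module.Dual ℝ L)) h0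
  rw [← this, ← Submodule.finrank_map_subtype_eq L]
  have he : L ⊓ LinearMap.ker f = Submodule.map L.subtype (LinearMap.ker (f.domRestrict L)) := by
    ext x
    simp [and_comm]
  rw [he]

theorem RelOpen.step {V : Type*} [AddCommGroup V] [Module ℝ V] [FiniteDimensional ℝ V] {C : Set V}
    {L : Submodule ℝ V} (h : RelOpen C L) (f : V →ₗ[ℝ] ℝ) :
    ∑ s : SignType, cellWt (C ∩ {x | SignType.sign (f x) = s}) = cellWt C := by
  have hs : ∀ g : SignType → ℤ, ∑ s, g s = g 0 + (g (-1) + g 1) := by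
    intro g
    rw [SignType.univ_eq]
    rw [Finset.sum_insert (by decide), Finset.sum_insert (by decide), Finset.sum_singleton]
  rw [hs, set_sign_neg, set_sign_pos, set_sign_zero]
  by_cases hC : C.Nonempty
  swap
  · have hD : ∀ D : Set V, cellWt (C ∩ D) = 0 := fun D =>
      cellWt_empty fun ⟨x, hx⟩ => hC ⟨x, hx.1⟩
    rw [hD, hD, hD, cellWt_empty hC]
    simp
  by_cases hy : ∀ y ∈ L, f y = 0
  · have h0 : C ∩ {x | f x = 0} = C := by
      ext x
      exact ⟨fun h => h.1, fun hx => ⟨hx, hy x (h.sub hx)⟩⟩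
    rw [h0, cellWt_empty (C := C ∩ {x | 0 < (-f) x}), cellWt_empty (C := C ∩ {x | 0 < f x})]
    · simp
    · rintro ⟨x, hx, h1⟩
      simp [hy x (h.sub hx)] at h1
    · rintro ⟨x, hx, h1⟩
      simp [hy x (h.sub hx)] at h1
  push Not at hy
  obtain ⟨y, hy, hfy⟩ := hy
  have hd := finrank_inf_ker L f hy hfy
  by_cases h0 : (C ∩ {x | f x = 0}).Nonempty
  · have hp := h.pos_nonempty f hy hfy h0
    have hn := h.pos_nonempty (-f) hy (by simpa using hfy) (by simpa using h0)
    rw [(h.zero f).wt h0, (h.pos f).wt hp, (h.pos (-f)).wt hn, h.wt hC, ← hd, pow_succ]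
    ring
  · rw [cellWt_empty h0, zero_add, h.wt hC]
    by_cases hp : (C ∩ {x | 0 < f x}).Nonempty
    · rw [(h.pos f).wt hp, cellWt_empty, zero_add]
      rintro ⟨b, hb, hfb⟩
      obtain ⟨a, ha, hfa⟩ := hp
      apply h0
      have hfa : 0 < f a := hfa
      have hfb : f b < 0 := by simpa using hfb
      have hpos : 0 < f a - f b := by linarith
      refine ⟨(-f b / (f a - f b)) • a + (f a / (f a - f b)) • b,
        h.conv ha hb (div_nonneg (by linarith) hpos.le) (div_nonneg hfa.le hpos.le) ?_, ?_⟩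
      · field_simp; ring
      · simp only [Set.mem_ofPred_eq, map_add, map_smul, smul_eq_mul]
        field_simp; ring
    · rw [cellWt_empty hp, add_zero, (h.pos (-f)).wt]
      obtain ⟨a, ha⟩ := hC
      refine ⟨a, ha, ?_⟩
      have h1 : ¬ 0 < f a := fun h => hp ⟨a, ha, h⟩
      have h2 : f a ≠ 0 := fun h => h0 ⟨a, ha, h⟩
      have : f a < 0 := lt_of_le_of_ne (not_lt.1 h1) h2
      simpa using this

theorem RelOpen.total {V : Type*} [AddCommGroup V] [Module ℝ V] [FiniteDimensional ℝ V]
    (k : ℕ) : ∀ (f : Fin k → V →ₗ[ℝ] ℝ) (C : Set V) (L : Submodule ℝ V), RelOpen C L →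
    ∑ σ : Fin k → SignType, cellWt (C ∩ {x | ∀ i, SignType.sign (f i x) = σ i}) = cellWt C := by
  induction k with
  | zero => intro f C L h; simp
  | succ k ih =>
    intro f C L h
    rw [← (Fin.consEquiv (fun _ : Fin (k+1) => SignType)).sum_comp, Fintype.sum_prod_type,
      ← h.step (f 0)]
    refine Finset.sum_congr rfl fun s _ => ?_
    obtain ⟨L', hL'⟩ := h.sign (f 0) s
    rw [← ih (fun i => f i.succ) _ _ hL']
    refine Finset.sum_congr rfl fun σ _ => ?_
    congr 1
    ext x
    simp [Fin.forall_fin_succ, Fin.consEquiv, and_assoc]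

theorem sign_eq_iff_mul (a b : ℝ) :
    (0 < a * b ∨ (a = 0 ∧ b = 0)) ↔ SignType.sign a = SignType.sign b := by
  rcases lt_trichotomy a 0 with ha | rfl | ha <;> rcases lt_trichotomy b 0 with hb | rfl | hb <;>
    simp [*, mul_pos_of_neg_of_neg, mul_pos, le_of_lt, mul_nonpos_iff, ne_of_gt, ne_of_lt]

theorem sign_add_mul (a b t : ℝ) (ht : 0 < t)
    (h : a ≠ 0 → SignType.sign b = SignType.sign a) :
    SignType.sign (a + t * b) = SignType.sign b := by
  rcases lt_trichotomy a 0 with ha | rfl | ha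
  · have h1 := h ha.ne
    rw [sign_neg ha, sign_eq_neg_one_iff] at h1
    rw [sign_neg h1, sign_neg]
    nlinarith
  · simp [sign_mul, sign_pos ht]
  · have h1 := h ha.ne'
    rw [sign_pos ha, sign_eq_one_iff] at h1
    rw [sign_pos h1, sign_pos]
    positivity

theorem sign_of_ker_eq {V : Type*} [AddCommGroup V] [Module ℝ V] {f g : V →ₗ[ℝ] ℝ}
    (hk : LinearMap.ker g = LinearMap.ker f) {x y : V}
    (h : SignType.sign (f x) = SignType.sign (f y)) :
    SignType.sign (g x) = SignType.sign (g y) := by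
  by_cases hf : ∀ v, f v = 0
  · have : ∀ v, g v = 0 := fun v => by
      have : v ∈ LinearMap.ker g := by rw [hk]; exact hf v
      exact this
    simp [this]
  push Not at hf
  obtain ⟨v, hv⟩ := hf
  have key : ∀ x, g x = f x * (g v / f v) := by
    intro x
    have : x - (f x / f v) • v ∈ LinearMap.ker g := by
      rw [hk]; simp [hv]
    have : g (x - (f x / f v) • v) = 0 := this
    simp only [map_sub, map_smul, smul_eq_mul] at this
    rw [sub_eq_zero.1 this]; ring
  rw [key x, key y, sign_mul, sign_mul, h]

/-- Euler characteristic of the link of a face: for every face `A`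
of a central essential arrangement `H` in an `n`-dimensional space,
`Σ_{B ≥ A} (−1)^{n − dim B} = 1`. -/
theorem statement13 {V : Type*} [NormedAddCommGroup V] [NormedSpace ℝ V]
    [FiniteDimensional ℝ V] (H : Finset (Submodule ℝ V))
    (hHyp : ∀ W ∈ H, ∃ f : V →ₗ[ℝ] ℝ, f ≠ 0 ∧ LinearMap.ker f = W)
    (hEss : (⋂ W ∈ H, (W : Set V)) = {0})
    (A : Set V) (hA : IsFace H A)
    (F : Finset (Set V))
    (hF : ∀ B : Set V, B ∈ F ↔ IsFace H B ∧ A ⊆ closure B) :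
    ∑ B ∈ F,
      (-1 : ℤ) ^ (Module.finrank ℝ V - Module.finrank ℝ (Submodule.span ℝ B)) = 1 := by
  classical
  have hex : ∃ (k : ℕ) (f : Fin k → V →ₗ[ℝ] ℝ),
      ∀ W : Submodule ℝ V, W ∈ H ↔ ∃ i, LinearMap.ker (f i) = W := by
    choose! φ hφ using hHyp
    refine ⟨H.card, fun i => φ (H.equivFin.symm i), fun W => ⟨fun hW => ?_, ?_⟩⟩
    · exact ⟨H.equivFin ⟨W, hW⟩, by simpa using (hφ W hW).2⟩
    · rintro ⟨i, rfl⟩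
      rw [(hφ _ (H.equivFin.symm i).2).2]
      exact (H.equivFin.symm i).2
  obtain ⟨k, f, hf⟩ := hex
  have hsame : ∀ x y, SameFace H x y ↔
      ∀ i, SignType.sign (f i x) = SignType.sign (f i y) := by
    intro x y
    constructor
    · intro h i
      exact (sign_eq_iff_mul _ _).1 (h _ ((hf _).2 ⟨i, rfl⟩) (f i) rfl)
    · intro h W hW g hg
      obtain ⟨i, rfl⟩ := (hf W).1 hW
      exact (sign_eq_iff_mul _ _).2 (sign_of_ker_eq hg (h i))
  obtain ⟨a, rfl⟩ := hA
  have hcont : ∀ i, Continuous (f i) := fun i => (f i).continuous_of_finiteDimensional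
  -- faces above the face of `a`
  have hcl : ∀ y, ({z | SameFace H a z} ⊆ closure {z | SameFace H y z}) ↔
      ∀ i, f i a ≠ 0 → SignType.sign (f i y) = SignType.sign (f i a) := by
    intro y
    constructor
    · intro h i hi
      have ha : a ∈ closure {z | SameFace H y z} := h ((hsame a a).2 fun _ => rfl)
      rw [mem_closure_iff] at ha
      rcases lt_or_gt_of_ne hi with hi | hi
      · obtain ⟨z, hz, hz2⟩ := ha {z | f i z < 0} (isOpen_lt (hcont i) continuous_const) hi
        rw [(hsame y z).1 hz2 i, sign_neg hi, sign_neg hz]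
      · obtain ⟨z, hz, hz2⟩ := ha {z | 0 < f i z} (isOpen_lt continuous_const (hcont i)) hi
        rw [(hsame y z).1 hz2 i, sign_pos hi, sign_pos hz]
    · intro h b hb
      have hb := (hsame a b).1 hb
      have ht : Filter.Tendsto (fun t : ℝ => b + t • y) (nhdsWithin 0 (Set.Ioi 0)) (nhds b) := by
        have : Continuous (fun t : ℝ => b + t • y) := by fun_prop
        have := this.tendsto 0
        simp only [zero_smul, add_zero] at this
        exact this.mono_left nhdsWithin_le_nhds
      refine mem_closure_of_tendsto ht ?_
      filter_upwards [self_mem_nhdsWithin] with t ht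
      refine (hsame _ _).2 fun i => ?_
      rw [map_add, map_smul, smul_eq_mul, sign_add_mul _ _ _ ht]
      intro hbi
      rw [← hb i]
      apply h
      intro h0
      have := hb i
      rw [h0, sign_zero, eq_comm, sign_eq_zero_iff] at this
      exact hbi this
  set C : Set V := {x | ∀ i, f i a ≠ 0 → SignType.sign (f i x) = SignType.sign (f i a)} with hCdef
  have hCne : C.Nonempty := ⟨a, fun i _ => rfl⟩
  have hCeq : C = ⋂ i, {x | f i a ≠ 0 → SignType.sign (f i x) = SignType.sign (f i a)} := by
    ext x; simp [hCdef]
  have hpiece : ∀ i, RelOpen {x | f i a ≠ 0 → SignType.sign (f i x) = SignType.sign (f i a)}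
      (⊤ : Submodule ℝ V) := by
    intro i
    have hu : RelOpen (Set.univ : Set V) (⊤ : Submodule ℝ V) :=
      ⟨fun _ _ => trivial, convex_univ, fun _ _ _ _ => by simp⟩
    rcases lt_trichotomy (f i a) 0 with h | h | h
    · have := hu.pos (-(f i))
      rw [← set_sign_neg, Set.univ_inter] at this
      simpa [h.ne, sign_neg h] using this
    · simpa [h] using hu
    · have := hu.pos (f i)
      rw [← set_sign_pos, Set.univ_inter] at this
      simpa [h.ne', sign_pos h] using this
  have hC : RelOpen C (⊤ : Submodule ℝ V) := by
    rw [hCeq]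
    refine ⟨fun _ _ => trivial, convex_iInter fun i => (hpiece i).conv, fun x hx y hy => ?_⟩
    simp only [Set.mem_iInter] at hx ⊢
    exact Filter.eventually_all.2 fun i => (hpiece i).op x (hx i) y hy
  have htot := RelOpen.total k f C _ hC
  rw [hC.wt hCne, finrank_top] at htot
  have hFeq : F = (Finset.univ.filter fun σ : Fin k → SignType =>
      (C ∩ {x | ∀ i, SignType.sign (f i x) = σ i}).Nonempty).image
      (fun σ => C ∩ {x | ∀ i, SignType.sign (f i x) = σ i}) := by
    have haux : ∀ y ∈ C, C ∩ {x | ∀ i, SignType.sign (f i x) = SignType.sign (f i y)}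
        = {z | SameFace H y z} := by
      intro y hy
      ext z
      simp only [Set.mem_inter_iff, Set.mem_ofPred_eq, hsame]
      constructor
      · intro h i; exact (h.2 i).symm
      · intro h
        exact ⟨fun i hi => by rw [← h i]; exact hy i hi, fun i => (h i).symm⟩
    ext B
    rw [hF]
    simp only [Finset.mem_image, Finset.mem_filter, Finset.mem_univ, true_and]
    constructor
    · rintro ⟨⟨y, rfl⟩, hB⟩
      have hy : y ∈ C := (hcl y).1 hB
      exact ⟨fun i => SignType.sign (f i y), ⟨y, hy, fun i => rfl⟩, haux y hy⟩
    · rintro ⟨σ, ⟨y, hy, hσ⟩, rfl⟩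
      obtain rfl : (fun i => SignType.sign (f i y)) = σ := funext hσ
      rw [haux y hy]
      exact ⟨⟨y, rfl⟩, (hcl y).2 hy⟩
  have hsum : ∑ B ∈ F, (-1 : ℤ) ^ (Module.finrank ℝ (Submodule.span ℝ B))
      = (-1) ^ Module.finrank ℝ V := by
    rw [hFeq, Finset.sum_image, ← htot, Finset.sum_filter]
    · rfl
    · intro σ hσ τ _ heq
      obtain ⟨y, hy⟩ := (Finset.mem_filter.1 hσ).2
      have hy2 : y ∈ C ∩ {x | ∀ i, SignType.sign (f i x) = τ i} := by
        have heq : C ∩ {x | ∀ i, SignType.sign (f i x) = σ i}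
          = C ∩ {x | ∀ i, SignType.sign (f i x) = τ i} := heq
        rw [← heq]; exact hy
      funext i
      rw [← hy.2 i, ← hy2.2 i]
  have hterm : ∀ B ∈ F,
      (-1 : ℤ) ^ (Module.finrank ℝ V - Module.finrank ℝ (Submodule.span ℝ B))
      = (-1) ^ Module.finrank ℝ V * (-1) ^ (Module.finrank ℝ (Submodule.span ℝ B)) := by
    intro B _
    obtain ⟨m, hm⟩ := Nat.exists_eq_add_of_le (Submodule.finrank_le (Submodule.span ℝ B))
    rw [hm, Nat.add_sub_cancel_left, pow_add, mul_right_comm, ← pow_add, ← two_mul, pow_mul]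
    simp
  rw [Finset.sum_congr rfl hterm, ← Finset.mul_sum, hsum, ← pow_add, ← two_mul, pow_mul]
  simp
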